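/- arXiv:1302.5535 — 3 statements merged into one kernel-verified Lean document; each statement's English description precedes it below -/
import Mathlib

section
/- Let A ∈ ℝ^{n×n} be nonsingular and let 1 ≤ k ≤ d(A) − 1. Then the k-th worst-case GMRES approximations of A and of its transpose coincide: Ψ_k(A) = Ψ_k(Aᵀ). -/
open Polynomial Matrix

/-- The Euclidean norm of a real vector. -/
noncomputable def euclNorm {ι : Type*} [Fintype ι] (v : ι → ℝ) : ℝ :=
  Real.sqrt (∑ i, v i ^ 2)

/-- The Euclidean norm of a complex vector. -/
noncomputable def euclNormC {ι : Type*} [Fintype ι] (v : ι → ℂ) : ℝ :=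
  Real.sqrt (∑ i, ‖v i‖ ^ 2)

/-- The Euclidean inner product of two real vectors. -/
noncomputable def edot {ι : Type*} [Fintype ι] (u v : ι → ℝ) : ℝ := ∑ i, u i * v i

/-- `p ∈ π_k`: real polynomials of degree at most `k` with value `1` at the origin. -/
def IsPik (k : ℕ) (p : Polynomial ℝ) : Prop := p.natDegree ≤ k ∧ p.eval 0 = 1

/-- `p ∈ π_{k,ℂ}`: complex polynomials of degree at most `k` with value `1` at the origin. -/
def IsPikC (k : ℕ) (p : Polynomial ℂ) : Prop := p.natDegree ≤ k ∧ p.eval 0 = 1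

/-- The `k`-th GMRES residual norm `min_{p ∈ π_k} ‖p(A)v‖`. -/
noncomputable def gmresVal {ι : Type*} [Fintype ι] [DecidableEq ι]
    (A : Matrix ι ι ℝ) (k : ℕ) (v : ι → ℝ) : ℝ :=
  sInf {s : ℝ | ∃ p : Polynomial ℝ, IsPik k p ∧ s = euclNorm ((Polynomial.aeval A p).mulVec v)}

/-- The `k`-th worst-case GMRES approximation `Ψ_k(A) = max_{‖v‖=1} min_{p ∈ π_k} ‖p(A)v‖`. -/
noncomputable def Psi {ι : Type*} [Fintype ι] [DecidableEq ι]
    (A : Matrix ι ι ℝ) (k : ℕ) : ℝ :=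
  sSup {r : ℝ | ∃ v : ι → ℝ, euclNorm v = 1 ∧ r = gmresVal A k v}

/-- `d(A)`: the degree of the minimal polynomial of `A`. -/
noncomputable def dA {ι : Type*} [Fintype ι] [DecidableEq ι] (A : Matrix ι ι ℝ) : ℕ :=
  (minpoly ℝ A).natDegree

/-- `d(A,b)`: the smallest degree of a nonzero polynomial `q` with `q(A)b = 0`. -/
noncomputable def dAb {ι : Type*} [Fintype ι] [DecidableEq ι]
    (A : Matrix ι ι ℝ) (b : ι → ℝ) : ℕ :=
  sInf {d : ℕ | ∃ q : Polynomial ℝ, q ≠ 0 ∧ q.natDegree = d ∧ (Polynomial.aeval A q).mulVec b = 0}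

/-- `r = GMRES(A,b,k)`: `r = p(A)b` for some `p ∈ π_k` minimizing `‖p(A)b‖` over `π_k`. -/
def IsGmresRes {ι : Type*} [Fintype ι] [DecidableEq ι]
    (A : Matrix ι ι ℝ) (k : ℕ) (b r : ι → ℝ) : Prop :=
  ∃ p : Polynomial ℝ, IsPik k p ∧ r = (Polynomial.aeval A p).mulVec b ∧
    ∀ q : Polynomial ℝ, IsPik k q → euclNorm r ≤ euclNorm ((Polynomial.aeval A q).mulVec b)

/-- `p` is the `k`-th GMRES polynomial of `A` and `b`: `p ∈ π_k` minimizes `‖p(A)b‖`. -/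
def IsGmresPoly {ι : Type*} [Fintype ι] [DecidableEq ι]
    (A : Matrix ι ι ℝ) (k : ℕ) (b : ι → ℝ) (p : Polynomial ℝ) : Prop :=
  IsPik k p ∧ ∀ q : Polynomial ℝ, IsPik k q →
    euclNorm ((Polynomial.aeval A p).mulVec b) ≤ euclNorm ((Polynomial.aeval A q).mulVec b)

/-- The Krylov subspace `K_k(A,b) = span{b, Ab, …, A^{k-1}b}`. -/
noncomputable def krylov {ι : Type*} [Fintype ι] [DecidableEq ι]
    (A : Matrix ι ι ℝ) (k : ℕ) (b : ι → ℝ) : Submodule ℝ (ι → ℝ) :=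
  Submodule.span ℝ (Set.range fun i : Fin k => (A ^ (i : ℕ)).mulVec b)

/-- `b` satisfies the cross equality for `A` and step `k`. -/
def CrossEq {ι : Type*} [Fintype ι] [DecidableEq ι]
    (A : Matrix ι ι ℝ) (k : ℕ) (b : ι → ℝ) : Prop :=
  ∀ r s : ι → ℝ, IsGmresRes A k b r → IsGmresRes Aᵀ k ((euclNorm r)⁻¹ • r) s →
    b = (euclNorm s)⁻¹ • s

/-- The Krylov matrix `K(v) = [Av, A²v, …, A^k v]`. -/
noncomputable def Kmat {n : ℕ} (A : Matrix (Fin n) (Fin n) ℝ) (k : ℕ) (v : Fin n → ℝ) :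
    Matrix (Fin n) (Fin k) ℝ :=
  Matrix.of fun i j => (A ^ ((j : ℕ) + 1)).mulVec v i

/-- `γ(v) = (K(v)ᵀK(v))⁻¹ K(v)ᵀ v`. -/
noncomputable def gammaVec {n : ℕ} (A : Matrix (Fin n) (Fin n) ℝ) (k : ℕ) (v : Fin n → ℝ) :
    Fin k → ℝ :=
  ((Kmat A k v)ᵀ * Kmat A k v)⁻¹ *ᵥ ((Kmat A k v)ᵀ *ᵥ v)

/-- `g(v) = min_{c ∈ ℝ^k} ‖v - K(v)c‖²`. -/
noncomputable def gFun {n : ℕ} (A : Matrix (Fin n) (Fin n) ℝ) (k : ℕ) (v : Fin n → ℝ) : ℝ :=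
  sInf {s : ℝ | ∃ c : Fin k → ℝ, s = euclNorm (v - Kmat A k v *ᵥ c) ^ 2}

/-- `p(z; c) = 1 - ∑_{j=1}^k c_j z^j`. -/
noncomputable def pPoly {k : ℕ} (c : Fin k → ℝ) : Polynomial ℝ :=
  1 - ∑ j : Fin k, Polynomial.C (c j) * Polynomial.X ^ ((j : ℕ) + 1)

/-- `f(c,v) = ‖p(A;c)v‖²`. -/
noncomputable def fFun {n k : ℕ} (A : Matrix (Fin n) (Fin n) ℝ) (c : Fin k → ℝ)
    (v : Fin n → ℝ) : ℝ :=
  euclNorm ((Polynomial.aeval A (pPoly c)).mulVec v) ^ 2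

/-- `F(c,v) = f(c,v)/(vᵀv)`. -/
noncomputable def FFun {n k : ℕ} (A : Matrix (Fin n) (Fin n) ℝ) (c : Fin k → ℝ)
    (v : Fin n → ℝ) : ℝ :=
  fFun A c v / edot v v

/-- The Toh matrix `A(ω, ε)`. -/
noncomputable def tohMatrix (ω ε : ℝ) : Matrix (Fin 4) (Fin 4) ℝ :=
  !![1, ε, 0, 0; 0, -1, ω / ε, 0; 0, 0, 1, ε; 0, 0, 0, -1]

/-- `p` is a `k`-th worst-case GMRES polynomial of `A`. -/
def IsWCPoly {ι : Type*} [Fintype ι] [DecidableEq ι]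
    (A : Matrix ι ι ℝ) (k : ℕ) (p : Polynomial ℝ) : Prop :=
  IsPik k p ∧ ∃ b : ι → ℝ, euclNorm b = 1 ∧
    (∀ q : Polynomial ℝ, IsPik k q →
      euclNorm ((Polynomial.aeval A p).mulVec b) ≤ euclNorm ((Polynomial.aeval A q).mulVec b)) ∧
    euclNorm ((Polynomial.aeval A p).mulVec b) = Psi A k

/-- The spectral (Euclidean operator) norm of a real matrix. -/
noncomputable def specNorm {ι : Type*} [Fintype ι] (M : Matrix ι ι ℝ) : ℝ :=
  sSup {r : ℝ | ∃ v : ι → ℝ, euclNorm v = 1 ∧ r = euclNorm (M *ᵥ v)}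

/-- The `k`-th ideal GMRES approximation `φ_k(A) = min_{p ∈ π_k} ‖p(A)‖`. -/
noncomputable def phiIdeal {ι : Type*} [Fintype ι] [DecidableEq ι]
    (A : Matrix ι ι ℝ) (k : ℕ) : ℝ :=
  sInf {r : ℝ | ∃ p : Polynomial ℝ, IsPik k p ∧ r = specNorm (Polynomial.aeval A p)}

/-- Complexification of a real matrix. -/
noncomputable def matC {ι : Type*} (A : Matrix ι ι ℝ) : Matrix ι ι ℂ :=
  A.map fun x => (x : ℂ)

/-- Complexification of a real vector. -/
noncomputable def vecC {ι : Type*} (b : ι → ℝ) : ι → ℂ := fun i => (b i : ℂ)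

/-- `Ψ_{k,ℂ,ℝ}(A)`: complex polynomials, real initial vectors. -/
noncomputable def PsiCR {ι : Type*} [Fintype ι] [DecidableEq ι]
    (A : Matrix ι ι ℝ) (k : ℕ) : ℝ :=
  sSup {r : ℝ | ∃ b : ι → ℝ, euclNorm b = 1 ∧
    r = sInf {s : ℝ | ∃ p : Polynomial ℂ, IsPikC k p ∧
      s = euclNormC ((Polynomial.aeval (matC A) p).mulVec (vecC b))}}

/-- `Ψ_{k,ℂ,ℂ}(A)`: complex polynomials, complex initial vectors. -/
noncomputable def PsiCC {ι : Type*} [Fintype ι] [DecidableEq ι]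
    (A : Matrix ι ι ℝ) (k : ℕ) : ℝ :=
  sSup {r : ℝ | ∃ b : ι → ℂ, euclNormC b = 1 ∧
    r = sInf {s : ℝ | ∃ p : Polynomial ℂ, IsPikC k p ∧
      s = euclNormC ((Polynomial.aeval (matC A) p).mulVec b)}}

/-- `Ψ_{k,ℝ,ℂ}(A)`: real polynomials, complex initial vectors. -/
noncomputable def PsiRC {ι : Type*} [Fintype ι] [DecidableEq ι]
    (A : Matrix ι ι ℝ) (k : ℕ) : ℝ :=
  sSup {r : ℝ | ∃ b : ι → ℂ, euclNormC b = 1 ∧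
    r = sInf {s : ℝ | ∃ p : Polynomial ℝ, IsPik k p ∧
      s = euclNormC ((Polynomial.aeval (matC A) (p.map (algebraMap ℝ ℂ))).mulVec b)}}

/-- `φ_{k,ℝ,ℝ}(A)`. -/
noncomputable def phiRR {ι : Type*} [Fintype ι] [DecidableEq ι]
    (A : Matrix ι ι ℝ) (k : ℕ) : ℝ :=
  sInf {r : ℝ | ∃ p : Polynomial ℝ, IsPik k p ∧
    r = sSup {s : ℝ | ∃ b : ι → ℝ, euclNorm b = 1 ∧
      s = euclNorm ((Polynomial.aeval A p).mulVec b)}}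

/-- `φ_{k,ℂ,ℝ}(A)`. -/
noncomputable def phiCR {ι : Type*} [Fintype ι] [DecidableEq ι]
    (A : Matrix ι ι ℝ) (k : ℕ) : ℝ :=
  sInf {r : ℝ | ∃ p : Polynomial ℂ, IsPikC k p ∧
    r = sSup {s : ℝ | ∃ b : ι → ℝ, euclNorm b = 1 ∧
      s = euclNormC ((Polynomial.aeval (matC A) p).mulVec (vecC b))}}

/-- `φ_{k,ℝ,ℂ}(A)`. -/
noncomputable def phiRC {ι : Type*} [Fintype ι] [DecidableEq ι]
    (A : Matrix ι ι ℝ) (k : ℕ) : ℝ :=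
  sInf {r : ℝ | ∃ p : Polynomial ℝ, IsPik k p ∧
    r = sSup {s : ℝ | ∃ b : ι → ℂ, euclNormC b = 1 ∧
      s = euclNormC ((Polynomial.aeval (matC A) (p.map (algebraMap ℝ ℂ))).mulVec b)}}

/-- `φ_{k,ℂ,ℂ}(A)`. -/
noncomputable def phiCC {ι : Type*} [Fintype ι] [DecidableEq ι]
    (A : Matrix ι ι ℝ) (k : ℕ) : ℝ :=
  sInf {r : ℝ | ∃ p : Polynomial ℂ, IsPikC k p ∧
    r = sSup {s : ℝ | ∃ b : ι → ℂ, euclNormC b = 1 ∧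
      s = euclNormC ((Polynomial.aeval (matC A) p).mulVec b)}}

theorem euclNorm_eq_norm {n : ℕ} (v : Fin n → ℝ) :
    euclNorm v = ‖(WithLp.toLp 2 v : EuclideanSpace ℝ (Fin n))‖ := by
  simp [euclNorm, EuclideanSpace.norm_eq]

theorem gmresVal_le {n : ℕ} (A : Matrix (Fin n) (Fin n) ℝ) (k : ℕ) (v : Fin n → ℝ)
    (p : Polynomial ℝ) (hp : IsPik k p) :
    gmresVal A k v ≤ euclNorm ((Polynomial.aeval A p).mulVec v) := by
  apply csInf_le
  · refine ⟨0, ?_⟩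
    rintro s ⟨p, -, rfl⟩
    exact Real.sqrt_nonneg _
  · exact ⟨p, hp, rfl⟩

theorem isPik_one (k : ℕ) : IsPik k 1 := by
  simp [IsPik]

theorem gmresVal_nonneg {n : ℕ} (A : Matrix (Fin n) (Fin n) ℝ) (k : ℕ) (v : Fin n → ℝ) :
    0 ≤ gmresVal A k v := by
  apply Real.sInf_nonneg
  rintro s ⟨p, -, rfl⟩
  exact Real.sqrt_nonneg _

theorem le_Psi {n : ℕ} (A : Matrix (Fin n) (Fin n) ℝ) (k : ℕ) (v : Fin n → ℝ)
    (hv : euclNorm v = 1) : gmresVal A k v ≤ Psi A k := by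
  apply le_csSup
  · refine ⟨1, ?_⟩
    rintro s ⟨w, hw, rfl⟩
    have := gmresVal_le A k w 1 (isPik_one k)
    simpa [hw] using this
  · exact ⟨v, hv, rfl⟩

theorem Psi_nonneg {n : ℕ} (A : Matrix (Fin n) (Fin n) ℝ) (k : ℕ) : 0 ≤ Psi A k := by
  apply Real.sSup_nonneg
  rintro s ⟨w, hw, rfl⟩
  exact gmresVal_nonneg A k w

theorem aeval_transpose' {n : ℕ} (A : Matrix (Fin n) (Fin n) ℝ) (q : Polynomial ℝ) :
    Polynomial.aeval Aᵀ q = (Polynomial.aeval A q)ᵀ := by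
  induction q using Polynomial.induction_on' with
  | add p q hp hq => simp [hp, hq]
  | monomial m a => simp [Polynomial.aeval_monomial, Algebra.algebraMap_eq_smul_one]

/-- Existence of a GMRES residual polynomial, with its orthogonality property. -/
theorem exists_orth {n : ℕ} (A : Matrix (Fin n) (Fin n) ℝ) (k : ℕ) (v : Fin n → ℝ) :
    ∃ p : Polynomial ℝ, IsPik k p ∧ ∀ q : Polynomial ℝ, IsPik k q →
      ((Polynomial.aeval A p).mulVec v) ⬝ᵥ ((Polynomial.aeval A q).mulVec v) =
      ((Polynomial.aeval A p).mulVec v) ⬝ᵥ ((Polynomial.aeval A p).mulVec v) := by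
  let L : Polynomial ℝ →ₗ[ℝ] EuclideanSpace ℝ (Fin n) :=
    { toFun := fun p => WithLp.toLp 2 ((Polynomial.aeval A p).mulVec v)
      map_add' := fun p q => by simp [Matrix.add_mulVec]
      map_smul' := fun c p => by simp [Matrix.smul_mulVec] }
  let D : Submodule ℝ (Polynomial ℝ) :=
    Polynomial.degreeLE ℝ k ⊓ LinearMap.ker (Polynomial.leval (0 : ℝ))
  have hD : ∀ p, p ∈ D ↔ p.natDegree ≤ k ∧ p.eval 0 = 0 := by
    intro p
    simp [D, Polynomial.mem_degreeLE, Polynomial.natDegree_le_iff_degree_le, Polynomial.leval]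
  obtain ⟨S, hS⟩ : ∃ S : Submodule ℝ (EuclideanSpace ℝ (Fin n)), S = D.map L := ⟨_, rfl⟩
  have hmem := S.starProjection_apply_mem (L 1)
  obtain ⟨p0, hp0, hL⟩ : ∃ p0 ∈ D, L p0 = S.starProjection (L 1) := by
    rw [hS] at hmem ⊢
    exact Submodule.mem_map.1 hmem
  have hp0' := (hD p0).1 hp0
  have hp : IsPik k (1 - p0) := by
    refine ⟨?_, by simp [hp0'.2]⟩
    exact (Polynomial.natDegree_sub_le _ _).trans (by simp [hp0'.1])
  refine ⟨1 - p0, hp, fun q hq => ?_⟩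
  have hm : q - (1 - p0) ∈ D := by
    rw [hD]
    refine ⟨(Polynomial.natDegree_sub_le _ _).trans (max_le hq.1 hp.1), ?_⟩
    rw [Polynomial.eval_sub, hq.2, hp.2, sub_self]
  have h0 : inner ℝ (L (1 - p0)) (L (q - (1 - p0))) = 0 := by
    rw [map_sub L 1 p0, hL]
    exact S.starProjection_inner_eq_zero _ _ (hS ▸ Submodule.mem_map_of_mem hm)
  rw [map_sub L q (1 - p0), inner_sub_right, sub_eq_zero] at h0
  rw [EuclideanSpace.inner_eq_star_dotProduct, EuclideanSpace.inner_eq_star_dotProduct,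
    star_trivial, dotProduct_comm] at h0
  exact h0

theorem euclNorm_sq {n : ℕ} (v : Fin n → ℝ) : euclNorm v ^ 2 = v ⬝ᵥ v := by
  rw [euclNorm, Real.sq_sqrt (Finset.sum_nonneg fun i _ => sq_nonneg _)]
  simp [dotProduct, sq]

theorem dot_le_euclNorm {n : ℕ} (v w : Fin n → ℝ) : v ⬝ᵥ w ≤ euclNorm v * euclNorm w := by
  rw [euclNorm_eq_norm, euclNorm_eq_norm]
  have := real_inner_le_norm (WithLp.toLp 2 v : EuclideanSpace ℝ (Fin n)) (WithLp.toLp 2 w)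
  simpa [EuclideanSpace.inner_eq_star_dotProduct, dotProduct_comm] using this

theorem Psi_le_transpose {n : ℕ} (A : Matrix (Fin n) (Fin n) ℝ) (k : ℕ) :
    Psi A k ≤ Psi Aᵀ k := by
  apply Real.sSup_le _ (Psi_nonneg _ _)
  rintro s ⟨v, hv, rfl⟩
  obtain ⟨p, hp, horth⟩ := exists_orth A k v
  set r := (Polynomial.aeval A p).mulVec v with hr
  have hle : gmresVal A k v ≤ euclNorm r := gmresVal_le A k v p hp
  have hnn : 0 ≤ euclNorm r := Real.sqrt_nonneg _
  rcases hnn.eq_or_lt with h0 | hpos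
  · rw [← h0] at hle
    exact hle.trans (Psi_nonneg _ _)
  have hw : euclNorm ((euclNorm r)⁻¹ • r) = 1 := by
    rw [euclNorm_eq_norm, WithLp.toLp_smul, norm_smul, ← euclNorm_eq_norm, norm_inv,
      Real.norm_of_nonneg hpos.le, inv_mul_cancel₀ hpos.ne']
  refine hle.trans (le_trans ?_ (le_Psi Aᵀ k _ hw))
  refine le_csInf ⟨_, 1, isPik_one k, rfl⟩ ?_
  rintro s ⟨q, hq, rfl⟩
  have h1 := dot_le_euclNorm ((Polynomial.aeval Aᵀ q).mulVec ((euclNorm r)⁻¹ • r)) v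
  rw [hv, mul_one] at h1
  refine le_trans (le_of_eq ?_) h1
  rw [aeval_transpose', Matrix.mulVec_smul, smul_dotProduct, Matrix.mulVec_transpose,
    ← Matrix.dotProduct_mulVec, horth q hq, ← euclNorm_sq, smul_eq_mul]
  field_simp

/-- For a nonsingular `A ∈ ℝ^{n×n}` and `1 ≤ k ≤ d(A) - 1`,
`Ψ_k(A) = Ψ_k(Aᵀ)`. -/
theorem worst_case_gmres_transpose {n : ℕ} (A : Matrix (Fin n) (Fin n) ℝ)
    (hA : IsUnit A) (k : ℕ) (hk1 : 1 ≤ k) (hk2 : k ≤ dA A - 1) :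
    Psi A k = Psi Aᵀ k := by
  exact le_antisymm (Psi_le_transpose A k)
    (by simpa using Psi_le_transpose Aᵀ k)
end

section
/- Let A ∈ ℝ^{n×n} be nonsingular, 1 ≤ k ≤ d(A) − 1, and let b ∈ ℝ^n be a unit norm vector whose k-th GMRES residual r_k = GMRES(A, b, k) is nonzero. Then for every polynomial q ∈ π_k one has ‖r_k‖² = ⟨b, r_k⟩ = ⟨b, q(Aᵀ)r_k⟩ ≤ ‖q(Aᵀ)r_k‖. -/
open Polynomial Matrix

lemma euclNorm_sq_aux {ι : Type*} [Fintype ι] (v : ι → ℝ) : euclNorm v ^ 2 = edot v v := by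
  unfold euclNorm edot
  rw [Real.sq_sqrt (Finset.sum_nonneg fun i _ => sq_nonneg _)]
  exact Finset.sum_congr rfl fun i _ => by ring

lemma edot_eq_dot_aux {ι : Type*} [Fintype ι] (u v : ι → ℝ) : edot u v = u ⬝ᵥ v := rfl

lemma edot_orth_aux {ι : Type*} [Fintype ι] (r w : ι → ℝ)
    (h : ∀ t : ℝ, edot r r ≤ edot (r + t • w) (r + t • w)) : edot w r = 0 := by
  simp only [edot_eq_dot_aux, add_dotProduct, dotProduct_add, smul_dotProduct, dotProduct_smul,
    smul_eq_mul, dotProduct_comm r w] at h ⊢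
  generalize w ⬝ᵥ r = x at *
  have hw : 0 ≤ w ⬝ᵥ w := Finset.sum_nonneg fun i _ => mul_self_nonneg _
  generalize w ⬝ᵥ w = y at *
  have h1 := h (-x / (y + 1))
  have hy : 0 < y + 1 := by linarith
  have e : -x / (y + 1) * (y + 1) = -x := by field_simp
  generalize -x / (y + 1) = t at *
  have hx : x = -t * (y + 1) := by linarith
  have ht : t ^ 2 * (y + 2) ≤ 0 := by subst hx; nlinarith
  have ht0 : t = 0 := by
    by_contra hne
    have : 0 < t ^ 2 := by positivity
    nlinarith
  simp [hx, ht0]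

lemma aeval_transpose_aux {ι : Type*} [Fintype ι] [DecidableEq ι] (A : Matrix ι ι ℝ)
    (q : Polynomial ℝ) : aeval Aᵀ q = (aeval A q)ᵀ := by
  induction q using Polynomial.induction_on' with
  | add p q hp hq => simp [hp, hq]
  | monomial n a => simp [aeval_monomial, Matrix.transpose_pow, Algebra.algebraMap_eq_smul_one]

lemma edot_le_aux {ι : Type*} [Fintype ι] (u v : ι → ℝ) :
    edot u v ≤ euclNorm u * euclNorm v := Real.sum_mul_le_sqrt_mul_sqrt _ _ _

/-- If `b` is a unit norm vector with nonzero `k`-th GMRES residual `r`,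
then for every `q ∈ π_k`: `‖r‖² = ⟨b,r⟩ = ⟨b, q(Aᵀ)r⟩ ≤ ‖q(Aᵀ)r‖`. -/
theorem gmres_residual_cross_inequality {n : ℕ} (A : Matrix (Fin n) (Fin n) ℝ)
    (hA : IsUnit A) (k : ℕ) (hk1 : 1 ≤ k) (hk2 : k ≤ dA A - 1)
    (b r : Fin n → ℝ) (hb : euclNorm b = 1) (hr : IsGmresRes A k b r) (hr0 : r ≠ 0) :
    ∀ q : Polynomial ℝ, IsPik k q →
      euclNorm r ^ 2 = edot b r ∧
      edot b r = edot b ((Polynomial.aeval Aᵀ q).mulVec r) ∧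
      edot b ((Polynomial.aeval Aᵀ q).mulVec r) ≤ euclNorm ((Polynomial.aeval Aᵀ q).mulVec r) := by
  obtain ⟨p, hp, hrp, hmin⟩ := hr
  have key : ∀ q : Polynomial ℝ, IsPik k q →
      edot b ((Polynomial.aeval Aᵀ q).mulVec r) = euclNorm r ^ 2 := by
    intro q hq
    have h0 : edot b ((Polynomial.aeval Aᵀ q).mulVec r)
        = edot ((Polynomial.aeval A q).mulVec b) r := by
      rw [aeval_transpose_aux, edot_eq_dot_aux, edot_eq_dot_aux, Matrix.dotProduct_mulVec,
        Matrix.vecMul_transpose]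
    have h1 : edot ((Polynomial.aeval A (q - p)).mulVec b) r = 0 := by
      apply edot_orth_aux
      intro t
      have hm := hmin (p + Polynomial.C t * (q - p)) ⟨by
        refine (Polynomial.natDegree_add_le _ _).trans (max_le hp.1 ?_)
        exact (Polynomial.natDegree_C_mul_le _ _).trans
          ((Polynomial.natDegree_sub_le _ _).trans (max_le hq.1 hp.1)), by
        simp [hp.2, hq.2]⟩
      have e : (Polynomial.aeval A (p + Polynomial.C t * (q - p))).mulVec b
          = r + t • (Polynomial.aeval A (q - p)).mulVec b := by
        rw [map_add, map_mul, Polynomial.aeval_C, Matrix.add_mulVec, ← hrp,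
          Algebra.algebraMap_eq_smul_one, smul_mul_assoc, one_mul, Matrix.smul_mulVec]
      rw [e] at hm
      rw [← euclNorm_sq_aux, ← euclNorm_sq_aux]
      exact pow_le_pow_left₀ (Real.sqrt_nonneg _) hm 2
    rw [h0, euclNorm_sq_aux]
    rw [map_sub, Matrix.sub_mulVec, ← hrp, edot_eq_dot_aux, sub_dotProduct] at h1
    rw [edot_eq_dot_aux, edot_eq_dot_aux]
    linarith
  intro q hq
  have h1 := key 1 ⟨by simp, by simp⟩
  rw [map_one, Matrix.one_mulVec] at h1
  refine ⟨h1.symm, by rw [h1, key q hq], ?_⟩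
  have := edot_le_aux b ((Polynomial.aeval Aᵀ q).mulVec r)
  rwa [hb, one_mul] at this
end

section
/- Let A ∈ ℝ^{n×n} be nonsingular and 1 ≤ k < d(A). If (c̃, ṽ) ∈ ℝ^k × ℝ^n with ‖ṽ‖ = 1 solves the worst-case GMRES problem, i.e., f(c̃, ṽ) = max_{‖v‖=1} min_{c ∈ ℝ^k} f(c, v), then ṽ is a right singular vector of the matrix p(A; c̃): it satisfies p(A; c̃)ᵀ p(A; c̃) ṽ = f(c̃, ṽ) ṽ, with corresponding singular value σ = √(f(c̃, ṽ)). -/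
open Polynomial Matrix

/-- Analytic core: first-order optimality along a line. -/
lemma wc_core {E : Type*} [NormedAddCommGroup E] [InnerProductSpace ℝ E]
    (r v h g : E) (T : E →L[ℝ] E) (hv : ‖v‖ = 1)
    (H : ∀ t : ℝ, ∃ y : E, inner ℝ r y = 0 ∧
      ‖r + t • g - y - t • T y‖ ^ 2 ≤ ‖r‖ ^ 2 * ‖v + t • h‖ ^ 2) :
    inner ℝ r g = ‖r‖ ^ 2 * inner ℝ v h := by
  set m := ‖r‖ ^ 2 with hm
  set B := ‖T‖ + 1 with hB
  have hBpos : 0 < B := by positivity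
  set R := ‖r‖ with hR
  have hR0 : 0 ≤ R := norm_nonneg r
  set L := inner ℝ r g - m * inner ℝ v h with hL
  set C := m * ‖h‖ ^ 2 + ‖g‖ ^ 2 + 8 * (R * B) ^ 2 with hC
  have hC0 : 0 ≤ C := by positivity
  have key : ∀ t : ℝ, |t| * B ≤ 1 / 2 → 2 * t * L ≤ C * t ^ 2 := by
    intro t ht
    obtain ⟨y, hy, hle⟩ := H t
    have hTy : ‖T y‖ ≤ B * ‖y‖ := by
      have := T.le_opNorm y
      nlinarith [norm_nonneg y]
    set u := y + t • T y with hu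
    have hun : ‖y‖ / 2 ≤ ‖u‖ := by
      have h1 : ‖y‖ ≤ ‖u‖ + ‖t • T y‖ := by
        have : y = u - t • T y := by rw [hu]; abel
        calc ‖y‖ = ‖u - t • T y‖ := by rw [← this]
          _ ≤ _ := norm_sub_le _ _
      have h2 : ‖t • T y‖ ≤ ‖y‖ / 2 := by
        rw [norm_smul, Real.norm_eq_abs]
        have := mul_le_mul_of_nonneg_left hTy (abs_nonneg t)
        nlinarith [norm_nonneg y]
      linarith
    have e1 : r + t • g - y - t • T y = r + (t • g - u) := by rw [hu]; abel
    rw [e1, norm_add_sq_real, norm_add_sq_real, hv] at hle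
    rw [inner_sub_right, hu, inner_add_right, hy, real_inner_smul_right, real_inner_smul_right,
      real_inner_smul_right, norm_smul, ← hu, mul_pow, Real.norm_eq_abs, sq_abs] at hle
    have e2 : inner ℝ r (T y) * t ≤ |t| * (R * B * ‖y‖) := by
      calc inner ℝ r (T y) * t ≤ |inner ℝ r (T y) * t| := le_abs_self _
        _ = |t| * |inner ℝ r (T y)| := by rw [abs_mul, mul_comm]
        _ ≤ |t| * (R * B * ‖y‖) := by
          apply mul_le_mul_of_nonneg_left _ (abs_nonneg t)
          calc |inner ℝ r (T y)| ≤ ‖r‖ * ‖T y‖ := abs_real_inner_le_norm _ _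
            _ ≤ ‖r‖ * (B * ‖y‖) := by gcongr
            _ = _ := by rw [← hR]; ring
    have e3 : ‖u‖ ^ 2 / 2 - t ^ 2 * ‖g‖ ^ 2 ≤ ‖t • g - u‖ ^ 2 := by
      have h1 : ‖u‖ ≤ |t| * ‖g‖ + ‖t • g - u‖ := by
        have : u = t • g - (t • g - u) := by abel
        calc ‖u‖ = ‖t • g - (t • g - u)‖ := by rw [← this]
          _ ≤ ‖t • g‖ + ‖t • g - u‖ := norm_sub_le _ _
          _ = _ := by rw [norm_smul, Real.norm_eq_abs]
      have h2 : ‖u‖ ^ 2 ≤ (|t| * ‖g‖ + ‖t • g - u‖) ^ 2 := by gcongr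
      have h3 : (|t| * ‖g‖) ^ 2 = t ^ 2 * ‖g‖ ^ 2 := by rw [mul_pow, sq_abs]
      nlinarith [sq_nonneg (|t| * ‖g‖ - ‖t • g - u‖)]
    have e4 : (‖y‖ / 2) ^ 2 ≤ ‖u‖ ^ 2 := by gcongr
    have e5 : 2 * (|t| * (R * B * ‖y‖)) ≤ 8 * (R * B) ^ 2 * t ^ 2 + ‖y‖ ^ 2 / 8 := by
      have := sq_nonneg (8 * (|t| * (R * B)) - ‖y‖)
      have h3 : (|t| * (R * B)) ^ 2 = t ^ 2 * (R * B) ^ 2 := by rw [mul_pow, sq_abs]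
      nlinarith
    rw [hL, hC]
    nlinarith
  by_contra hne
  have hL0 : L ≠ 0 := fun h0 => hne (by rw [hL] at h0; linarith)
  set δ := min (1 / (2 * B)) (|L| / (C + 1)) with hδ
  have hδpos : 0 < δ := by
    apply lt_min
    · positivity
    · have := abs_pos.mpr hL0; positivity
  have hδ1 : δ * B ≤ 1 / 2 := by
    have : δ ≤ 1 / (2 * B) := min_le_left _ _
    rw [le_div_iff₀ (by positivity)] at this
    linarith
  have hδ2 : δ * (C + 1) ≤ |L| := by
    have : δ ≤ |L| / (C + 1) := min_le_right _ _
    rwa [le_div_iff₀ (by positivity)] at this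
  have h2 : 2 * δ * |L| ≤ C * δ ^ 2 := by
    rcases le_total 0 L with h | h
    · rw [abs_of_nonneg h]
      exact key δ (by rwa [abs_of_pos hδpos])
    · rw [abs_of_nonpos h]
      have := key (-δ) (by rwa [abs_neg, abs_of_pos hδpos])
      nlinarith
  nlinarith

lemma wc_euclNorm {n : ℕ} (v : Fin n → ℝ) : euclNorm v = ‖WithLp.toLp 2 v‖ := by
  simp [euclNorm, EuclideanSpace.norm_eq]

lemma wc_mulVec {n k : ℕ} (A : Matrix (Fin n) (Fin n) ℝ) (c : Fin k → ℝ) (v : Fin n → ℝ) :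
    (Polynomial.aeval A (pPoly c)) *ᵥ v = v - Kmat A k v *ᵥ c := by
  have : Kmat A k v *ᵥ c = ∑ j, c j • ((A ^ ((j : ℕ) + 1)) *ᵥ v) := by
    ext i
    simp [Kmat, Matrix.mulVec, dotProduct, mul_comm]
  rw [this]
  simp only [pPoly, map_sub, map_one, map_sum, map_mul, map_pow, aeval_X, aeval_C,
    Matrix.sub_mulVec, Matrix.one_mulVec, Matrix.sum_mulVec, ← Algebra.smul_def,
    Matrix.smul_mulVec]

lemma wc_Kmat_add {n k : ℕ} (A : Matrix (Fin n) (Fin n) ℝ) (v h : Fin n → ℝ) (t : ℝ) :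
    Kmat A k (v + t • h) = Kmat A k v + t • Kmat A k h := by
  ext i j
  simp [Kmat, Matrix.mulVec_add, Matrix.mulVec_smul]

lemma wc_strip {n : ℕ} (A : Matrix (Fin n) (Fin n) ℝ) (hA : IsUnit A) (v : Fin n → ℝ) (N : ℕ) :
    ∀ q : ℝ[X], q ≠ 0 → q.natDegree ≤ N → (Polynomial.aeval A q) *ᵥ v = 0 →
      ∃ s : ℝ[X], s.coeff 0 ≠ 0 ∧ s.natDegree ≤ N ∧ (Polynomial.aeval A s) *ᵥ v = 0 := by
  induction N with
  | zero =>
    intro q hq hd h0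
    refine ⟨q, ?_, hd, h0⟩
    intro hc
    apply hq
    rw [Polynomial.eq_C_of_natDegree_le_zero hd, hc, C_0]
  | succ N ih =>
    intro q hq hd h0
    by_cases hc : q.coeff 0 = 0
    · have e : q = X * divX q := by
        have := X_mul_divX_add q
        rw [hc] at this
        simpa using this.symm
      have hq' : divX q ≠ 0 := by
        intro h; rw [h] at e; exact hq (by simpa using e)
      have hd' : (divX q).natDegree ≤ N := by
        rw [natDegree_divX_eq_natDegree_tsub_one]; omega
      have h0' : (Polynomial.aeval A (divX q)) *ᵥ v = 0 := by
        rw [e, map_mul, aeval_X, ← Matrix.mulVec_mulVec] at h0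
        exact (Matrix.mulVec_injective_iff_isUnit.mpr hA) (by rw [h0, Matrix.mulVec_zero])
      obtain ⟨s, h1, h2, h3⟩ := ih _ hq' hd' h0'
      exact ⟨s, h1, by omega, h3⟩
    · exact ⟨q, hc, hd, h0⟩

lemma wc_exists_c {k : ℕ} (s : ℝ[X]) (hs : s.coeff 0 ≠ 0) (hd : s.natDegree ≤ k) :
    ∃ c : Fin k → ℝ, pPoly c = C (s.coeff 0)⁻¹ * s := by
  refine ⟨fun j => -((s.coeff 0)⁻¹ * s.coeff (j + 1)), ?_⟩
  conv_rhs => arg 2; rw [s.as_sum_range_C_mul_X_pow' (n := k + 1) (by omega)]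
  rw [Finset.sum_range_succ', mul_add, Finset.mul_sum, pPoly, Finset.sum_range]
  have : C (s.coeff 0)⁻¹ * (C (s.coeff 0) * X ^ 0) = (1 : ℝ[X]) := by
    rw [pow_zero, mul_one, ← C_mul, inv_mul_cancel₀ hs, C_1]
  rw [this, sub_eq_add_neg, add_comm, ← Finset.sum_neg_distrib]
  congr 1
  apply Finset.sum_congr rfl
  intro j _
  rw [C_neg, C_mul]; ring

lemma wc_injective {n k : ℕ} (A : Matrix (Fin n) (Fin n) ℝ) (hA : IsUnit A)
    (v : Fin n → ℝ) (hpos : ∀ c : Fin k → ℝ, (Polynomial.aeval A (pPoly c)) *ᵥ v ≠ 0) :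
    Function.Injective (Kmat A k v).mulVecLin := by
  rw [← LinearMap.ker_eq_bot, LinearMap.ker_eq_bot']
  intro d hd
  by_contra hd0
  rw [Matrix.mulVecLin_apply] at hd
  set q : ℝ[X] := 1 - pPoly d with hq
  have hqe : q = ∑ j : Fin k, C (d j) * X ^ ((j : ℕ) + 1) := by rw [hq, pPoly]; ring
  have hcoeff : ∀ i : Fin k, q.coeff (i + 1) = d i := by
    intro i
    rw [hqe, finsetSum_coeff, Finset.sum_eq_single i]
    · simp
    · intro b _ hb
      rw [coeff_C_mul_X_pow, if_neg]
      intro h; apply hb; ext; omega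
    · simp
  have hq0 : q ≠ 0 := by
    intro h
    apply hd0
    ext i
    rw [← hcoeff i, h]; simp
  have hqd : q.natDegree ≤ k := by
    rw [hqe]
    apply natDegree_sum_le_of_forall_le
    intro j _
    exact (natDegree_C_mul_X_pow_le _ _).trans (by omega)
  have hqv : (Polynomial.aeval A q) *ᵥ v = 0 := by
    rw [hq, map_sub, map_one, Matrix.sub_mulVec, wc_mulVec, hd]; simp
  obtain ⟨s, h1, h2, h3⟩ := wc_strip A hA v k q hq0 hqd hqv
  obtain ⟨c, hc⟩ := wc_exists_c s h1 h2
  apply hpos c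
  rw [hc, map_mul, ← Matrix.mulVec_mulVec, h3, Matrix.mulVec_zero]

lemma wc_orth {E : Type*} [NormedAddCommGroup E] [InnerProductSpace ℝ E] (r y : E)
    (H : ∀ s : ℝ, ‖r‖ ^ 2 ≤ ‖r - s • y‖ ^ 2) : inner ℝ r y = 0 := by
  have h1 := H (inner ℝ r y / (‖y‖ ^ 2 + 1))
  set a := inner ℝ r y with ha
  have hp : 0 < ‖y‖ ^ 2 + 1 := by positivity
  set s := a / (‖y‖ ^ 2 + 1) with hs
  have has : a = s * (‖y‖ ^ 2 + 1) := by rw [hs]; field_simp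
  clear_value s a
  rw [norm_sub_sq_real, real_inner_smul_right, norm_smul, mul_pow, Real.norm_eq_abs, sq_abs,
    ← ha] at h1
  have : s ^ 2 * (‖y‖ ^ 2 + 2) ≤ 0 := by
    have h2 : s * a = s ^ 2 * (‖y‖ ^ 2 + 1) := by rw [has]; ring
    rw [h2] at h1; linarith
  have hs0 : s ^ 2 = 0 := by nlinarith [sq_nonneg s, sq_nonneg ‖y‖, mul_nonneg (sq_nonneg s) (sq_nonneg ‖y‖)]
  rw [has, pow_eq_zero_iff (two_ne_zero) |>.mp hs0, zero_mul]

lemma wc_inner {n : ℕ} (v w : Fin n → ℝ) :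
    inner ℝ (WithLp.toLp 2 v) (WithLp.toLp 2 w) = v ⬝ᵥ w := by
  rw [EuclideanSpace.inner_toLp_toLp, dotProduct_comm]; simp

/-- If `(c̃, ṽ)` with `‖ṽ‖ = 1` solves the worst-case GMRES problem
`max_{‖v‖=1} min_c f(c,v)`, then `ṽ` is a right singular vector of `p(A;c̃)`:
`p(A;c̃)ᵀ p(A;c̃) ṽ = f(c̃,ṽ) ṽ`. -/
theorem worst_case_right_singular_vector {n : ℕ} (A : Matrix (Fin n) (Fin n) ℝ)
    (hA : IsUnit A) (k : ℕ) (hk1 : 1 ≤ k) (hk2 : k < dA A)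
    (ct : Fin k → ℝ) (vt : Fin n → ℝ) (hvt : euclNorm vt = 1)
    (hmin : ∀ c : Fin k → ℝ, fFun A ct vt ≤ fFun A c vt)
    (hmax : ∀ v : Fin n → ℝ, euclNorm v = 1 → ∃ c : Fin k → ℝ, fFun A c v ≤ fFun A ct vt) :
    ((Polynomial.aeval A (pPoly ct))ᵀ * Polynomial.aeval A (pPoly ct)) *ᵥ vt
      = fFun A ct vt • vt := by
  have hf : ∀ (c : Fin k → ℝ) (v : Fin n → ℝ),
      fFun A c v = ‖WithLp.toLp 2 (v - Kmat A k v *ᵥ c)‖ ^ 2 := by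
    intro c v
    rw [fFun, wc_mulVec, wc_euclNorm]
  rw [← Matrix.mulVec_mulVec]
  by_cases hz : fFun A ct vt = 0
  · have : (Polynomial.aeval A (pPoly ct)) *ᵥ vt = 0 := by
      have h2 := hz
      rw [hf, ← wc_mulVec] at h2
      have h3 := norm_eq_zero.mp (pow_eq_zero_iff two_ne_zero |>.mp h2)
      exact (WithLp.toLp_eq_zero 2).mp h3
    rw [hz, this]; simp
  have hnn : 0 ≤ fFun A ct vt := by rw [hf]; positivity
  have hpos : ∀ c : Fin k → ℝ, (Polynomial.aeval A (pPoly c)) *ᵥ vt ≠ 0 := by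
    intro c hc
    have h1 := hmin c
    have h2 : fFun A c vt = 0 := by rw [hf, ← wc_mulVec, hc]; simp
    rw [h2] at h1
    exact hz (le_antisymm h1 hnn)
  obtain ⟨G, hG⟩ := LinearMap.exists_leftInverse_of_injective _
    (LinearMap.ker_eq_bot.mpr (wc_injective A hA vt hpos))
  have hG' : ∀ d, G (Kmat A k vt *ᵥ d) = d := fun d => by
    have := LinearMap.congr_fun hG d
    simpa using this
  set P := Polynomial.aeval A (pPoly ct) with hP
  set r := P *ᵥ vt with hr
  have hm : fFun A ct vt = ‖WithLp.toLp 2 r‖ ^ 2 := by rw [hf, hr, hP, wc_mulVec]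
  have horth : ∀ d : Fin k → ℝ,
      inner ℝ (WithLp.toLp 2 r) (WithLp.toLp 2 (Kmat A k vt *ᵥ d)) = 0 := by
    intro d
    apply wc_orth
    intro s
    have h1 := hmin (ct + s • d)
    rw [hm, hf] at h1
    refine h1.trans (le_of_eq ?_)
    congr 2
    rw [← WithLp.toLp_smul, ← WithLp.toLp_sub, hr, hP, wc_mulVec, Matrix.mulVec_add,
      Matrix.mulVec_smul, sub_sub]
  have hscale : ∀ w : Fin n → ℝ, ∃ c : Fin k → ℝ,
      ‖WithLp.toLp 2 (w - Kmat A k w *ᵥ c)‖ ^ 2 ≤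
        ‖WithLp.toLp 2 r‖ ^ 2 * ‖WithLp.toLp 2 w‖ ^ 2 := by
    intro w
    by_cases hw : w = 0
    · refine ⟨ct, ?_⟩
      rw [← wc_mulVec, hw]; simp
    have hwn : ‖WithLp.toLp 2 w‖ ≠ 0 := by
      rw [norm_ne_zero_iff]; intro h; exact hw ((WithLp.toLp_eq_zero 2).mp h)
    obtain ⟨c, hc⟩ := hmax (‖WithLp.toLp 2 w‖⁻¹ • w) (by
      rw [wc_euclNorm, WithLp.toLp_smul, norm_smul, norm_inv, norm_norm, inv_mul_cancel₀ hwn])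
    refine ⟨c, ?_⟩
    rw [hm, hf, ← wc_mulVec, Matrix.mulVec_smul, WithLp.toLp_smul, norm_smul, norm_inv, norm_norm,
      mul_pow, inv_pow, inv_mul_le_iff₀ (by positivity)] at hc
    rw [← wc_mulVec]
    linarith
  have hvn : ‖WithLp.toLp 2 vt‖ = 1 := by rw [← wc_euclNorm, hvt]
  have main : ∀ h : Fin n → ℝ, (Pᵀ *ᵥ r) ⬝ᵥ h = (fFun A ct vt • vt) ⬝ᵥ h := by
    intro h
    let T0 : EuclideanSpace ℝ (Fin n) →ₗ[ℝ] EuclideanSpace ℝ (Fin n) :=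
      (WithLp.linearEquiv 2 ℝ (Fin n → ℝ)).symm.toLinearMap ∘ₗ (Kmat A k h).mulVecLin ∘ₗ G ∘ₗ
        (WithLp.linearEquiv 2 ℝ (Fin n → ℝ)).toLinearMap
    have hT : ∀ d, T0 (WithLp.toLp 2 (Kmat A k vt *ᵥ d)) = WithLp.toLp 2 (Kmat A k h *ᵥ d) := by
      intro d
      simp [T0, hG']
    have := wc_core (WithLp.toLp 2 r) (WithLp.toLp 2 vt) (WithLp.toLp 2 h)
      (WithLp.toLp 2 (P *ᵥ h)) (LinearMap.toContinuousLinearMap T0) hvn (by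
        intro t
        obtain ⟨c, hc⟩ := hscale (vt + t • h)
        refine ⟨WithLp.toLp 2 (Kmat A k vt *ᵥ (c - ct)), horth _, ?_⟩
        rw [LinearMap.coe_toContinuousLinearMap', hT]
        rw [WithLp.toLp_add, WithLp.toLp_smul] at hc
        refine le_trans (le_of_eq ?_) hc
        congr 2
        rw [← WithLp.toLp_add, ← WithLp.toLp_smul]
        simp only [← WithLp.toLp_smul, ← WithLp.toLp_add, ← WithLp.toLp_sub]
        congr 1
        rw [hr, hP, wc_mulVec, wc_mulVec, wc_Kmat_add, Matrix.add_mulVec, Matrix.smul_mulVec,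
          Matrix.mulVec_sub, Matrix.mulVec_sub]
        module)
    rw [wc_inner, wc_inner, ← hm] at this
    rw [smul_dotProduct, smul_eq_mul, ← this, Matrix.mulVec_transpose, Matrix.dotProduct_mulVec]
  exact dotProduct_eq _ _ main
end
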